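/- arXiv:1902.03822 — 2 statements merged into one kernel-verified Lean document; each statement's English description precedes it below -/
import Mathlib

section
/- The right-angled Artin group A(P₄) = Gp⟨a, b, c, d | ab = ba, bc = cb, cd = dc⟩ embeds into the one-relator group G = Gp⟨a, t | a(tat⁻¹) = (tat⁻¹)a⟩: there is an injective group homomorphism A(P₄) →* G sending a ↦ a, b ↦ tat⁻¹, c ↦ t²at⁻², d ↦ t³at⁻³ (where a, t denote the images in G of the two free generators). -/
/-- The set of commutator relators of the right-angled Artin group of a simple graph `Γ`. -/
def raagRels {V : Type} (Γ : SimpleGraph V) : Set (FreeGroup V) :=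
  {x | ∃ u v : V, Γ.Adj u v ∧
    x = FreeGroup.of u * FreeGroup.of v * (FreeGroup.of u)⁻¹ * (FreeGroup.of v)⁻¹}

/-- The path graph on four vertices `0 — 1 — 2 — 3`. -/
def P4 : SimpleGraph (Fin 4) := SimpleGraph.fromEdgeSet {s(0, 1), s(1, 2), s(2, 3)}

/-- The relator `a t a t⁻¹ a⁻¹ t a⁻¹ t⁻¹` (i.e. `a(tat⁻¹)=(tat⁻¹)a`), with `a = of 0`, `t = of 1`. -/
def oneRel : FreeGroup (Fin 2) :=
  FreeGroup.of 0 * FreeGroup.of 1 * FreeGroup.of 0 * (FreeGroup.of 1)⁻¹ *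
    (FreeGroup.of 0)⁻¹ * FreeGroup.of 1 * (FreeGroup.of 0)⁻¹ * (FreeGroup.of 1)⁻¹

/-!
Let `P∞` be the bi-infinite path with vertex set `ℤ`, i.e. the Hasse diagram of `ℤ`. Translations
of `P∞` make `ℤ` act on `A(P∞)`, and in the semidirect product `A(P∞) ⋊ ℤ` the generator `t` of `ℤ`
satisfies `tⁿ a₀ t⁻ⁿ = aₙ`. As `a₀` commutes with `a₁`, there is a homomorphism `G → A(P∞) ⋊ ℤ`
with `a ↦ a₀` and `t ↦ t`. Composing it with `A(P∞) → G`, `aₙ ↦ tⁿ a t⁻ⁿ`, gives the inclusion of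
`A(P∞)`, so `A(P∞) → G` is injective. Finally `A(P₄)` embeds into `A(P∞)`, since a right-angled
Artin group retracts onto the subgroup generated by any set of vertices.
-/

/-- The right-angled Artin group `A(Γ)` of a simple graph `Γ`. -/
abbrev RAAG {V : Type} (Γ : SimpleGraph V) : Type :=
  PresentedGroup (raagRels Γ)

namespace RAAG

variable {V W : Type} {Γ : SimpleGraph V} {Δ : SimpleGraph W}

theorem commute_of_adj {u v : V} (h : Γ.Adj u v) :
    Commute (PresentedGroup.of u : RAAG Γ) (PresentedGroup.of v) := by
  have hrel := PresentedGroup.one_of_mem (rels := raagRels Γ) ⟨u, v, h, rfl⟩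
  rwa [← commutatorElement_def, map_commutatorElement,
    commutatorElement_eq_one_iff_commute] at hrel

section Lift

variable {H : Type*} [Group H]

/-- The universal property of `A(Γ)`: a map from the vertices to a group that sends adjacent
vertices to commuting elements extends to a homomorphism. -/
def lift (f : V → H) (hf : ∀ u v, Γ.Adj u v → Commute (f u) (f v)) : RAAG Γ →* H :=
  PresentedGroup.toGroup (f := f) <| by
    rintro _ ⟨u, v, huv, rfl⟩
    rw [← commutatorElement_def, map_commutatorElement, commutatorElement_eq_one_iff_commute]
    simpa only [FreeGroup.lift_apply_of] using hf u v huv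

@[simp]
theorem lift_of (f : V → H) (hf : ∀ u v, Γ.Adj u v → Commute (f u) (f v)) (v : V) :
    lift f hf (PresentedGroup.of v) = f v :=
  PresentedGroup.toGroup.of _

end Lift

/-- The homomorphism of right-angled Artin groups induced by a graph homomorphism. -/
def map (f : Γ →g Δ) : RAAG Γ →* RAAG Δ :=
  lift (fun v ↦ PresentedGroup.of (f v)) fun _ _ h ↦ commute_of_adj (f.map_adj h)

@[simp]
theorem map_of (f : Γ →g Δ) (v : V) :
    map f (PresentedGroup.of v) = PresentedGroup.of (f v) :=
  lift_of _ _ v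

/-- The retraction of `A(Δ)` onto `A(Γ)`, for `Γ` an induced subgraph of `Δ`, which kills the
vertices outside `Γ`. -/
noncomputable def retraction (f : Γ ↪g Δ) : RAAG Δ →* RAAG Γ :=
  lift (Function.extend f PresentedGroup.of 1) fun u v h ↦ by
    by_cases hu : ∃ x, f x = u
    · by_cases hv : ∃ y, f y = v
      · obtain ⟨⟨x, rfl⟩, ⟨y, rfl⟩⟩ := And.intro hu hv
        simpa only [f.injective.extend_apply] using commute_of_adj (f.map_adj_iff.mp h)
      · simp [Function.extend_apply' _ _ _ hv]
    · simp [Function.extend_apply' _ _ _ hu]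

theorem retraction_comp_map (f : Γ ↪g Δ) :
    (retraction f).comp (map f.toHom) = MonoidHom.id (RAAG Γ) := by
  ext v
  simp [retraction, f.injective.extend_apply]

theorem map_injective (f : Γ ↪g Δ) : Function.Injective (map f.toHom) :=
  Function.LeftInverse.injective (DFunLike.congr_fun (retraction_comp_map f))

/-- The action of the automorphisms of `Γ` on `A(Γ)`. -/
def autHom : (Γ ≃g Γ) →* MulAut (RAAG Γ) where
  toFun e := MonoidHom.toMulEquiv (map e.toHom) (map e.symm.toHom)
    (by ext v; simp) (by ext v; simp)
  map_one' := MulEquiv.toMonoidHom_injective <| by ext v; simp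
  map_mul' e₁ e₂ := MulEquiv.toMonoidHom_injective <| by ext v; simp

@[simp]
theorem autHom_of (e : Γ ≃g Γ) (v : V) :
    autHom e (PresentedGroup.of v) = PresentedGroup.of (e v) :=
  map_of e.toHom v

end RAAG

/-- The action of an ordered additive group on its Hasse diagram by left translations. -/
def hasseTranslation (A : Type*) [AddGroup A] [PartialOrder A] [AddLeftMono A] :
    Multiplicative A →* (SimpleGraph.hasse A ≃g SimpleGraph.hasse A) where
  toFun x :=
    { toEquiv := Equiv.addLeft x.toAdd
      map_rel_iff' := by simp [← OrderIso.addLeft_apply, SimpleGraph.hasse_adj] }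
  map_one' := by ext; simp
  map_mul' x y := by ext; simp

theorem hasseTranslation_apply {A : Type*} [AddGroup A] [PartialOrder A] [AddLeftMono A]
    (x : Multiplicative A) (y : A) : hasseTranslation A x y = x.toAdd + y :=
  rfl

theorem hasse_int_adj {m n : ℤ} : (SimpleGraph.hasse ℤ).Adj m n ↔ m + 1 = n ∨ n + 1 = m := by
  simp [Order.covBy_iff_add_one_eq]

/-- The path `P₄` as the induced subgraph of the bi-infinite path on the vertices `0, 1, 2, 3`. -/
def P4.toHasseInt : P4 ↪g SimpleGraph.hasse ℤ where
  toFun i := (i : ℕ)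
  inj' := Nat.cast_injective.comp Fin.val_injective
  map_rel_iff' {i j} := by
    fin_cases i <;> fin_cases j <;> simp [P4, hasse_int_adj, -SimpleGraph.hasse_adj]

theorem P4.toHasseInt_apply (i : Fin 4) : P4.toHasseInt i = (i : ℕ) :=
  rfl

section HasseInt

variable {H : Type*} [Group H] {a t : H}

theorem commute_conj_zpow (h : Commute a (t * a * t⁻¹)) (n : ℤ) :
    Commute (t ^ n * a * (t ^ n)⁻¹) (t ^ (n + 1) * a * (t ^ (n + 1))⁻¹) := by
  simpa only [zpow_add_one, mul_inv_rev, mul_assoc] using h.conj (t ^ n)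

/-- The homomorphism from the right-angled Artin group of the bi-infinite path that sends the
vertex `n` to `tⁿ a t⁻ⁿ`. -/
noncomputable def hasseIntLift (h : Commute a (t * a * t⁻¹)) : RAAG (SimpleGraph.hasse ℤ) →* H :=
  RAAG.lift (fun n : ℤ ↦ t ^ n * a * (t ^ n)⁻¹) fun m n hmn ↦ by
    obtain rfl | rfl := hasse_int_adj.mp hmn
    · exact commute_conj_zpow h m
    · exact (commute_conj_zpow h n).symm

@[simp]
theorem hasseIntLift_of (h : Commute a (t * a * t⁻¹)) (n : ℤ) :
    hasseIntLift h (PresentedGroup.of n) = t ^ n * a * (t ^ n)⁻¹ :=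
  RAAG.lift_of _ _ n

end HasseInt

/-- The semidirect product `A(P∞) ⋊ ℤ`, where `P∞` is the bi-infinite path and `ℤ` acts by
translations. -/
abbrev HasseIntSemidirect : Type :=
  RAAG (SimpleGraph.hasse ℤ) ⋊[RAAG.autHom.comp (hasseTranslation ℤ)] Multiplicative ℤ

theorem HasseIntSemidirect.inr_zpow_conj_inl (n : ℤ) :
    (SemidirectProduct.inr (Multiplicative.ofAdd 1) ^ n *
      SemidirectProduct.inl (PresentedGroup.of 0) *
      (SemidirectProduct.inr (Multiplicative.ofAdd 1) ^ n)⁻¹ : HasseIntSemidirect) =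
    SemidirectProduct.inl (PresentedGroup.of n) := by
  rw [← map_zpow, ← map_inv, ← SemidirectProduct.inl_aut, ← ofAdd_zsmul]
  simp [-ofAdd_zsmul, hasseTranslation_apply]

/-- The one-relator group `G = Gp⟨a, t | a(tat⁻¹) = (tat⁻¹)a⟩`. -/
abbrev OneRelGroup : Type :=
  PresentedGroup {oneRel}

namespace OneRelGroup

theorem lift_oneRel_eq_one_iff {H : Type*} [Group H] (f : Fin 2 → H) :
    FreeGroup.lift f oneRel = 1 ↔ Commute (f 0) (f 1 * f 0 * (f 1)⁻¹) := by
  rw [← commutatorElement_eq_one_iff_commute]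
  simp [oneRel, commutatorElement_def, mul_assoc]

theorem commute_conj : Commute (PresentedGroup.of 0 : OneRelGroup)
    (PresentedGroup.of 1 * PresentedGroup.of 0 * (PresentedGroup.of 1)⁻¹) := by
  rw [← lift_oneRel_eq_one_iff (fun i ↦ (PresentedGroup.of i : OneRelGroup))]
  have hmk : FreeGroup.lift PresentedGroup.of = PresentedGroup.mk {oneRel} := by
    ext; exact FreeGroup.lift_apply_of
  exact hmk ▸ PresentedGroup.one_of_mem rfl

/-- The homomorphism from `G` to `A(P∞) ⋊ ℤ` that sends `a` to the vertex `0` and `t` to the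
translation by `1`. -/
noncomputable def toHasseIntSemidirect : OneRelGroup →* HasseIntSemidirect :=
  PresentedGroup.toGroup
    (f := ![SemidirectProduct.inl (PresentedGroup.of 0),
      SemidirectProduct.inr (Multiplicative.ofAdd 1)]) <| by
    rintro _ rfl
    have hadj : (SimpleGraph.hasse ℤ).Adj 0 1 := hasse_int_adj.mpr (.inl rfl)
    rw [lift_oneRel_eq_one_iff]
    simpa [← HasseIntSemidirect.inr_zpow_conj_inl 1] using
      (RAAG.commute_of_adj hadj).map (SemidirectProduct.inl : _ →* HasseIntSemidirect)

theorem toHasseIntSemidirect_comp_hasseIntLift :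
    toHasseIntSemidirect.comp (hasseIntLift commute_conj) = SemidirectProduct.inl := by
  refine PresentedGroup.ext fun n ↦ ?_
  have h0 : toHasseIntSemidirect (PresentedGroup.of 0) =
      SemidirectProduct.inl (PresentedGroup.of 0) := PresentedGroup.toGroup.of _
  have h1 : toHasseIntSemidirect (PresentedGroup.of 1) =
      SemidirectProduct.inr (Multiplicative.ofAdd 1) := PresentedGroup.toGroup.of _
  simp only [MonoidHom.comp_apply, hasseIntLift_of, map_mul, map_zpow, map_inv, h0, h1,
    HasseIntSemidirect.inr_zpow_conj_inl]

theorem hasseIntLift_injective : Function.Injective (hasseIntLift commute_conj) := by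
  refine Function.Injective.of_comp (f := toHasseIntSemidirect) ?_
  rw [← MonoidHom.coe_comp, toHasseIntSemidirect_comp_hasseIntLift]
  exact SemidirectProduct.inl_injective

end OneRelGroup

theorem raag_P4_embeds_oneRelator_general {V : Type} {Γ : SimpleGraph V}
    (e : Γ ↪g SimpleGraph.hasse ℤ) :
    ∃ φ : PresentedGroup (raagRels Γ) →* PresentedGroup {oneRel},
      Function.Injective φ ∧
      ∀ v, φ (PresentedGroup.of v) =
        PresentedGroup.of 1 ^ e v * PresentedGroup.of 0 * (PresentedGroup.of 1 ^ e v)⁻¹ :=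
  ⟨(hasseIntLift OneRelGroup.commute_conj).comp (RAAG.map e.toHom),
    OneRelGroup.hasseIntLift_injective.comp (RAAG.map_injective e), fun v ↦ by simp⟩

/-- `A(P₄)` embeds into the one-relator group `Gp⟨a,t | a(tat⁻¹)=(tat⁻¹)a⟩` via
`a ↦ a`, `b ↦ tat⁻¹`, `c ↦ t²at⁻²`, `d ↦ t³at⁻³`. -/
theorem raag_P4_embeds_oneRelator :
    ∃ φ : PresentedGroup (raagRels P4) →* PresentedGroup {oneRel},
      Function.Injective φ ∧
      φ (PresentedGroup.of 0) = PresentedGroup.of 0 ∧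
      φ (PresentedGroup.of 1) =
        PresentedGroup.of 1 * PresentedGroup.of 0 * (PresentedGroup.of 1)⁻¹ ∧
      φ (PresentedGroup.of 2) =
        (PresentedGroup.of 1) ^ 2 * PresentedGroup.of 0 * ((PresentedGroup.of 1) ^ 2)⁻¹ ∧
      φ (PresentedGroup.of 3) =
        (PresentedGroup.of 1) ^ 3 * PresentedGroup.of 0 * ((PresentedGroup.of 1) ^ 3)⁻¹ := by
  obtain ⟨φ, hφ, hof⟩ := raag_P4_embeds_oneRelator_general P4.toHasseInt
  refine ⟨φ, hφ, ?_, ?_, hof 2, hof 3⟩ <;> simp [hof, P4.toHasseInt_apply]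
end

section
/- Let a, b, c, d denote the images in A(P₄) of the four generators, let H = Subgroup.closure {a, b, c} and K = Subgroup.closure {b, c, d} be subgroups of A(P₄), and let φ : H ≃* K be a group isomorphism with φ(a) = b, φ(b) = c and φ(c) = d. Then the HNN extension HNNExtension A(P₄) H K φ is isomorphic (as a group) to the one-relator group G = Gp⟨a, t | a(tat⁻¹) = (tat⁻¹)a⟩. -/
/-- The right-angled Artin group `A(P₄)`. -/
abbrev AP4 : Type := PresentedGroup (raagRels P4)

/-- The images in `A(P₄)` of the four generators. -/
def a : AP4 := PresentedGroup.of 0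
def b : AP4 := PresentedGroup.of 1
def c : AP4 := PresentedGroup.of 2
def d : AP4 := PresentedGroup.of 3

/-- `H = ⟨a, b, c⟩ ≤ A(P₄)`. -/
def H : Subgroup AP4 := Subgroup.closure {a, b, c}

/-- `K = ⟨b, c, d⟩ ≤ A(P₄)`. -/
def K : Subgroup AP4 := Subgroup.closure {b, c, d}

theorem ha_mem : a ∈ H := Subgroup.subset_closure (by simp)
theorem hb_memH : b ∈ H := Subgroup.subset_closure (by simp)
theorem hc_memH : c ∈ H := Subgroup.subset_closure (by simp)

/-!
In the HNN extension, conjugation by the stable letter `t` shifts the path by one vertex, so each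
generator `xᵢ` is `tⁱ x₀ t⁻ⁱ`, and the extension is generated by `x₀` and `t`. The same conjugation
carries the relation `[x₀, x₁] = 1` to every `[xᵢ, xᵢ₊₁] = 1`, so the single relation
`[x₀, t x₀ t⁻¹] = 1` is all that remains.
-/

section Group

variable {G Q : Type*} [Group G] [Group Q]

theorem semiconjBy_iff_conj_apply_eq {t x y : G} : SemiconjBy t x y ↔ MulAut.conj t x = y := by
  rw [MulAut.conj_apply, mul_inv_eq_iff_eq_mul, SemiconjBy]

theorem semiconjBy_of_closure_eq_top {S : Set G} (hS : Subgroup.closure S = ⊤) {f g : G →* Q}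
    {t : Q} (h : ∀ s ∈ S, SemiconjBy t (f s) (g s)) (x : G) : SemiconjBy t (f x) (g x) := by
  have conj_comp_eq : (MulAut.conj t).toMonoidHom.comp f = g :=
    MonoidHom.eq_of_eqOn_dense hS fun s hs => semiconjBy_iff_conj_apply_eq.mp (h s hs)
  exact semiconjBy_iff_conj_apply_eq.mpr (DFunLike.congr_fun conj_comp_eq x)

theorem commute_conj_pow_conj_pow_succ {x t : G} (h : Commute x (MulAut.conj t x)) (i : ℕ) :
    Commute (MulAut.conj (t ^ i) x) (MulAut.conj (t ^ (i + 1)) x) := by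
  simpa only [pow_succ, map_mul, MulAut.mul_apply] using h.map (MulAut.conj (t ^ i))

theorem map_conj_apply (f : G →* Q) (g x : G) :
    f (MulAut.conj g x) = MulAut.conj (f g) (f x) := by
  simp only [MulAut.conj_apply, map_mul, map_inv]

end Group

section Presentations

open scoped commutatorElement

theorem lift_presentedGroup_of {α : Type*} (rels : Set (FreeGroup α)) :
    FreeGroup.lift (PresentedGroup.of : α → PresentedGroup rels) = PresentedGroup.mk rels :=
  FreeGroup.ext_hom _ _ fun _ => FreeGroup.lift_apply_of

variable {V : Type} {Γ : SimpleGraph V} {Q : Type*} [Group Q]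

theorem lift_raagRels_eq_one_iff {f : V → Q} :
    (∀ r ∈ raagRels Γ, FreeGroup.lift f r = 1) ↔ ∀ u v, Γ.Adj u v → Commute (f u) (f v) := by
  have lift_commutator (u v : V) : FreeGroup.lift f ⁅FreeGroup.of u, FreeGroup.of v⁆ = 1 ↔
      Commute (f u) (f v) := by
    rw [map_commutatorElement, FreeGroup.lift_apply_of, FreeGroup.lift_apply_of,
      commutatorElement_eq_one_iff_commute]
  constructor
  · exact fun h u v huv => (lift_commutator u v).mp (h _ ⟨u, v, huv, rfl⟩)
  · rintro h _ ⟨u, v, huv, rfl⟩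
    exact (lift_commutator u v).mpr (h u v huv)

theorem commute_of_adj {u v : V} (h : Γ.Adj u v) :
    Commute (PresentedGroup.of u : PresentedGroup (raagRels Γ)) (PresentedGroup.of v) :=
  lift_raagRels_eq_one_iff.mp
    (fun _ hr => by rw [lift_presentedGroup_of, PresentedGroup.one_of_mem hr]) u v h

theorem lift_oneRel_eq_one_iff {f : Fin 2 → Q} :
    FreeGroup.lift f oneRel = 1 ↔ Commute (f 0) (MulAut.conj (f 1) (f 0)) := by
  have oneRel_eq_commutator :
      oneRel = ⁅FreeGroup.of (0 : Fin 2), MulAut.conj (FreeGroup.of 1) (FreeGroup.of 0)⁆ := by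
    simp only [oneRel, commutatorElement_def, MulAut.conj_apply]
    group
  rw [oneRel_eq_commutator, map_commutatorElement, map_conj_apply, FreeGroup.lift_apply_of,
    FreeGroup.lift_apply_of, commutatorElement_eq_one_iff_commute]

theorem oneRel_commute_conj :
    Commute (PresentedGroup.of 0 : PresentedGroup {oneRel})
      (MulAut.conj (PresentedGroup.of 1) (PresentedGroup.of 0)) :=
  lift_oneRel_eq_one_iff.mp
    (by rw [lift_presentedGroup_of, PresentedGroup.one_of_mem (Set.mem_singleton oneRel)])

end Presentations

section PathGraph

variable {n : ℕ} {Γ : SimpleGraph (Fin (n + 2))}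

theorem commute_conj_pow_of_adj {Q : Type*} [Group Q] (hΓ : Γ ≤ SimpleGraph.pathGraph (n + 2))
    {x t : Q} (h : Commute x (MulAut.conj t x)) (u v : Fin (n + 2)) (hadj : Γ.Adj u v) :
    Commute (MulAut.conj (t ^ (u : ℕ)) x) (MulAut.conj (t ^ (v : ℕ)) x) := by
  rcases SimpleGraph.pathGraph_adj.mp (hΓ hadj) with huv | hvu
  · rw [← huv]
    exact commute_conj_pow_conj_pow_succ h u
  · rw [← hvu]
    exact (commute_conj_pow_conj_pow_succ h v).symm

/-- The homomorphism from the right-angled Artin group of a subgraph of the path `0 — ⋯ — n + 1` to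
the one-relator group, sending the `i`-th generator to `tⁱ a t⁻ⁱ`, where `a = of 0` and
`t = of 1`. -/
def raagToOneRel (hΓ : Γ ≤ SimpleGraph.pathGraph (n + 2)) :
    PresentedGroup (raagRels Γ) →* PresentedGroup {oneRel} :=
  PresentedGroup.toGroup (lift_raagRels_eq_one_iff.mpr
    (commute_conj_pow_of_adj hΓ oneRel_commute_conj))

theorem raagToOneRel_of (hΓ : Γ ≤ SimpleGraph.pathGraph (n + 2)) (i : Fin (n + 2)) :
    raagToOneRel hΓ (PresentedGroup.of i) =
      MulAut.conj (PresentedGroup.of 1 ^ (i : ℕ)) (PresentedGroup.of 0) :=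
  PresentedGroup.toGroup.of _

variable {A B : Subgroup (PresentedGroup (raagRels Γ))} {φ : A ≃* B}

/-- `φ` shifts the generators of a right-angled Artin group with vertices `0, …, n + 1`: its domain
is generated by all of them but the last, and it sends each of these to the next generator. -/
structure IsGeneratorShift (φ : A ≃* B) : Prop where
  domain_eq_closure :
    A = Subgroup.closure (Set.range fun i : Fin (n + 1) => PresentedGroup.of i.castSucc)
  apply_of (i : Fin (n + 1)) (hi : PresentedGroup.of i.castSucc ∈ A) :
    (φ ⟨PresentedGroup.of i.castSucc, hi⟩ : PresentedGroup (raagRels Γ)) =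
      PresentedGroup.of i.succ

namespace IsGeneratorShift

theorem of_castSucc_mem (hφ : IsGeneratorShift φ) (i : Fin (n + 1)) :
    PresentedGroup.of i.castSucc ∈ A := by
  rw [hφ.domain_eq_closure]
  exact Subgroup.subset_closure (Set.mem_range_self i)

theorem of_eq_conj_pow (hφ : IsGeneratorShift φ) (i : Fin (n + 2)) :
    (HNNExtension.of (PresentedGroup.of i) : HNNExtension _ A B φ) =
      MulAut.conj (HNNExtension.t ^ (i : ℕ)) (HNNExtension.of (PresentedGroup.of 0)) := by
  induction i using Fin.induction with
  | zero => simp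
  | succ i ih =>
    rw [← hφ.apply_of i (hφ.of_castSucc_mem i), HNNExtension.equiv_eq_conj, ih, Fin.val_succ,
      pow_succ', map_mul, MulAut.mul_apply, Fin.val_castSucc, MulAut.conj_apply HNNExtension.t]

theorem semiconjBy_raagToOneRel (hφ : IsGeneratorShift φ)
    (hΓ : Γ ≤ SimpleGraph.pathGraph (n + 2)) (x : A) :
    SemiconjBy (PresentedGroup.of 1) (raagToOneRel hΓ x) (raagToOneRel hΓ (φ x)) := by
  obtain rfl := hφ.domain_eq_closure
  refine semiconjBy_of_closure_eq_top (f := (raagToOneRel hΓ).comp (Subgroup.subtype _))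
    (g := (raagToOneRel hΓ).comp (B.subtype.comp φ.toMonoidHom))
    Subgroup.closure_closure_coe_preimage ?_ x
  rintro ⟨_, hi⟩ ⟨i, rfl⟩
  change SemiconjBy _ (raagToOneRel hΓ (PresentedGroup.of i.castSucc))
    (raagToOneRel hΓ (φ ⟨PresentedGroup.of i.castSucc, hi⟩))
  rw [hφ.apply_of, raagToOneRel_of, raagToOneRel_of, semiconjBy_iff_conj_apply_eq, Fin.val_succ,
    pow_succ', map_mul, MulAut.mul_apply, Fin.val_castSucc]

/-- The homomorphism from the HNN extension along a shift to the one-relator group that extends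
`raagToOneRel` and sends the stable letter to `of 1`. -/
def hnnToOneRel (hφ : IsGeneratorShift φ) (hΓ : Γ ≤ SimpleGraph.pathGraph (n + 2)) :
    HNNExtension _ A B φ →* PresentedGroup {oneRel} :=
  HNNExtension.lift (raagToOneRel hΓ) (PresentedGroup.of 1) (hφ.semiconjBy_raagToOneRel hΓ)

theorem hnnToOneRel_of (hφ : IsGeneratorShift φ) (hΓ : Γ ≤ SimpleGraph.pathGraph (n + 2))
    (g : PresentedGroup (raagRels Γ)) :
    hφ.hnnToOneRel hΓ (HNNExtension.of g) = raagToOneRel hΓ g :=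
  HNNExtension.lift_of _ _ _ g

theorem hnnToOneRel_t (hφ : IsGeneratorShift φ) (hΓ : Γ ≤ SimpleGraph.pathGraph (n + 2)) :
    hφ.hnnToOneRel hΓ HNNExtension.t = PresentedGroup.of 1 :=
  HNNExtension.lift_t _ _ _

theorem commute_of_zero_conj_t (hφ : IsGeneratorShift φ) (h01 : Γ.Adj 0 1) :
    Commute (HNNExtension.of (PresentedGroup.of 0) : HNNExtension _ A B φ)
      (MulAut.conj HNNExtension.t (HNNExtension.of (PresentedGroup.of 0))) := by
  simpa only [hφ.of_eq_conj_pow 1, Fin.val_one, pow_one] using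
    (commute_of_adj h01).map (HNNExtension.of : _ →* HNNExtension _ A B φ)

/-- The homomorphism from the one-relator group to the HNN extension along a shift that sends
`of 0` to the first generator and `of 1` to the stable letter; it inverts `hnnToOneRel`. -/
def oneRelToHNN (hφ : IsGeneratorShift φ) (h01 : Γ.Adj 0 1) :
    PresentedGroup {oneRel} →* HNNExtension _ A B φ :=
  PresentedGroup.toGroup (f := ![HNNExtension.of (PresentedGroup.of 0), HNNExtension.t]) <| by
    rintro _ rfl
    exact lift_oneRel_eq_one_iff.mpr (hφ.commute_of_zero_conj_t h01)

theorem oneRelToHNN_of_zero (hφ : IsGeneratorShift φ) (h01 : Γ.Adj 0 1) :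
    hφ.oneRelToHNN h01 (PresentedGroup.of 0) = HNNExtension.of (PresentedGroup.of 0) :=
  PresentedGroup.toGroup.of _

theorem oneRelToHNN_of_one (hφ : IsGeneratorShift φ) (h01 : Γ.Adj 0 1) :
    hφ.oneRelToHNN h01 (PresentedGroup.of 1) = HNNExtension.t :=
  PresentedGroup.toGroup.of _

theorem oneRelToHNN_comp_hnnToOneRel (hφ : IsGeneratorShift φ)
    (hΓ : Γ ≤ SimpleGraph.pathGraph (n + 2)) (h01 : Γ.Adj 0 1) :
    (hφ.oneRelToHNN h01).comp (hφ.hnnToOneRel hΓ) = MonoidHom.id _ := by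
  refine HNNExtension.hom_ext (PresentedGroup.ext fun i => ?_) ?_
  · change hφ.oneRelToHNN h01 (hφ.hnnToOneRel hΓ (HNNExtension.of (PresentedGroup.of i))) =
      HNNExtension.of (PresentedGroup.of i)
    rw [hnnToOneRel_of, raagToOneRel_of, map_conj_apply, map_pow, oneRelToHNN_of_zero,
      oneRelToHNN_of_one, hφ.of_eq_conj_pow i]
  · rw [MonoidHom.comp_apply, hnnToOneRel_t, oneRelToHNN_of_one, MonoidHom.id_apply]

theorem hnnToOneRel_comp_oneRelToHNN (hφ : IsGeneratorShift φ)
    (hΓ : Γ ≤ SimpleGraph.pathGraph (n + 2)) (h01 : Γ.Adj 0 1) :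
    (hφ.hnnToOneRel hΓ).comp (hφ.oneRelToHNN h01) = MonoidHom.id _ := by
  refine PresentedGroup.ext (Fin.forall_fin_two.mpr ⟨?_, ?_⟩)
  · rw [MonoidHom.comp_apply, oneRelToHNN_of_zero, hnnToOneRel_of, raagToOneRel_of,
      Fin.val_zero, pow_zero, map_one, MulAut.one_apply, MonoidHom.id_apply]
  · rw [MonoidHom.comp_apply, oneRelToHNN_of_one, hnnToOneRel_t, MonoidHom.id_apply]

end IsGeneratorShift

theorem hnn_AP4_iso_oneRelator_general (hΓ : Γ ≤ SimpleGraph.pathGraph (n + 2))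
    (h01 : Γ.Adj 0 1) (hφ : IsGeneratorShift φ) :
    Nonempty (HNNExtension (PresentedGroup (raagRels Γ)) A B φ ≃* PresentedGroup {oneRel}) :=
  ⟨MonoidHom.toMulEquiv (hφ.hnnToOneRel hΓ) (hφ.oneRelToHNN h01)
    (hφ.oneRelToHNN_comp_hnnToOneRel hΓ h01) (hφ.hnnToOneRel_comp_oneRelToHNN hΓ h01)⟩

end PathGraph

theorem P4_eq_pathGraph : P4 = SimpleGraph.pathGraph 4 := by
  ext u v
  fin_cases u <;> fin_cases v <;> simp [P4, SimpleGraph.pathGraph_adj]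

theorem H_eq_closure_range :
    H = Subgroup.closure (Set.range fun i : Fin 3 => (PresentedGroup.of i.castSucc : AP4)) := by
  have range_eq :
      Set.range (fun i : Fin 3 => (PresentedGroup.of i.castSucc : AP4)) = {a, b, c} := by
    ext x
    simp [Fin.exists_fin_succ, a, b, c, eq_comm]
  rw [H, range_eq]

/-- The HNN extension of `A(P₄)` along any isomorphism `φ : H ≃* K` with `φ(a) = b`, `φ(b) = c`,
`φ(c) = d` is isomorphic to the one-relator group `Gp⟨a,t | a(tat⁻¹)=(tat⁻¹)a⟩`. -/
theorem hnn_AP4_iso_oneRelator (φ : H ≃* K)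
    (hφa : (φ ⟨a, ha_mem⟩ : AP4) = b)
    (hφb : (φ ⟨b, hb_memH⟩ : AP4) = c)
    (hφc : (φ ⟨c, hc_memH⟩ : AP4) = d) :
    Nonempty (HNNExtension AP4 H K φ ≃* PresentedGroup {oneRel}) :=
  hnn_AP4_iso_oneRelator_general P4_eq_pathGraph.le (by simp [P4])
    ⟨H_eq_closure_range, Fin.forall_fin_succ.mpr ⟨fun _ => hφa, Fin.forall_fin_two.mpr
      ⟨fun _ => hφb, fun _ => hφc⟩⟩⟩
end
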